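/- arXiv:2106.15695 — 2 statements merged into one kernel-verified Lean document; each statement's English description precedes it below -/
import Mathlib

section
/- Let D = {t ∈ ℂ : |t| < R} with 0 < R ≤ ∞, let Ω ⊆ ℂᵏ be a nonempty connected open set, and let f be holomorphic on (D∖{0}) × Ω. Suppose there exist a nonempty open subset V ⊆ Ω and a holomorphic function F₀ on D × V with F₀ = f on (D∖{0}) × V. Then there exists a holomorphic function F on D × Ω with F = f on (D∖{0}) × Ω. -/
open scoped ENNReal

open MeasureTheory Topology Filter Set

/-- superposition of a multilinear map with continuous functions -/
noncomputable def supMulti {X : Type*} [TopologicalSpace X] [CompactSpace X]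
    {A : Type*} [NormedAddCommGroup A] [NormedSpace ℂ A] {n : ℕ}
    (q : ContinuousMultilinearMap ℂ (fun _ : Fin n => A) ℂ) :
    ContinuousMultilinearMap ℂ (fun _ : Fin n => C(X, A)) C(X, ℂ) :=
  MultilinearMap.mkContinuous
    { toFun := fun φ => ⟨fun x => q (fun i => φ i x), by fun_prop⟩
      map_update_add' := by
        intro _ m i a b
        ext x
        have h : ∀ c : C(X, A), (fun j => (Function.update m i c) j x)
            = Function.update (fun j => m j x) i (c x) := by
          intro c; ext j; by_cases hj : j = i
          · subst hj; simp
          · simp [hj]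
        simp [h]
      map_update_smul' := by
        intro _ m i a b
        ext x
        have h : ∀ c : C(X, A), (fun j => (Function.update m i c) j x)
            = Function.update (fun j => m j x) i (c x) := by
          intro c; ext j; by_cases hj : j = i
          · subst hj; simp
          · simp [hj]
        simp [h] }
    ‖q‖ (by
      intro m
      refine (ContinuousMap.norm_le _ (by positivity)).2 fun x => ?_
      refine (q.le_opNorm _).trans ?_
      gcongr with i
      exact (m i).norm_coe_le_norm x)

lemma supMulti_apply {X : Type*} [TopologicalSpace X] [CompactSpace X]
    {A : Type*} [NormedAddCommGroup A] [NormedSpace ℂ A] {n : ℕ}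
    (q : ContinuousMultilinearMap ℂ (fun _ : Fin n => A) ℂ) (φ : Fin n → C(X, A)) (x : X) :
    supMulti q φ x = q (fun i => φ i x) := rfl

lemma supMulti_norm {X : Type*} [TopologicalSpace X] [CompactSpace X]
    {A : Type*} [NormedAddCommGroup A] [NormedSpace ℂ A] {n : ℕ}
    (q : ContinuousMultilinearMap ℂ (fun _ : Fin n => A) ℂ) :
    ‖supMulti (X := X) q‖ ≤ ‖q‖ :=
  MultilinearMap.mkContinuous_norm_le _ (norm_nonneg _) _

noncomputable def supSeries (X : Type*) [TopologicalSpace X] [CompactSpace X]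
    {A : Type*} [NormedAddCommGroup A] [NormedSpace ℂ A]
    (q : FormalMultilinearSeries ℂ A ℂ) : FormalMultilinearSeries ℂ C(X, A) C(X, ℂ) :=
  fun n => supMulti (q n)

lemma supSeries_radius (X : Type*) [TopologicalSpace X] [CompactSpace X]
    {A : Type*} [NormedAddCommGroup A] [NormedSpace ℂ A]
    (q : FormalMultilinearSeries ℂ A ℂ) : q.radius ≤ (supSeries X q).radius := by
  refine ENNReal.le_of_forall_nnreal_lt fun r hr => ?_
  obtain ⟨C, _, hC⟩ := q.norm_mul_pow_le_of_lt_radius hr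
  refine FormalMultilinearSeries.le_radius_of_bound _ C fun n => ?_
  refine le_trans ?_ (hC n)
  gcongr
  exact supMulti_norm _

lemma supSeries_sum {X : Type*} [TopologicalSpace X] [CompactSpace X]
    {A : Type*} [NormedAddCommGroup A] [NormedSpace ℂ A]
    (q : FormalMultilinearSeries ℂ A ℂ) (ψ : C(X, A))
    (hψ : ψ ∈ Metric.eball (0 : C(X, A)) q.radius) (x : X) :
    (supSeries X q).sum ψ x = q.sum (ψ x) := by
  have h1 := (supSeries X q).hasSum (Metric.eball_subset_eball (supSeries_radius X q) hψ)
  have h2 := (ContinuousMap.evalCLM ℂ x).hasSum h1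
  exact h2.tsum_eq.symm

/-- Local version. -/
lemma local_analytic {E : Type*} [NormedAddCommGroup E] [NormedSpace ℂ E]
    (H : ℂ × E → ℂ) (γ : ℝ → ℂ) (hγ : Continuous γ) (p₀ : E) (x₀ : ℝ)
    (hH : AnalyticAt ℂ H (γ x₀, p₀)) :
    ∃ S ∈ 𝓝 x₀, MeasurableSet S ∧ ∀ μ : Measure ℝ, IsFiniteMeasure μ → μ Sᶜ = 0 →
      AnalyticAt ℂ (fun p => ∫ x, H (γ x, p) ∂μ) p₀ ∧
      ∀ᶠ p in 𝓝 p₀, Integrable (fun x => H (γ x, p)) μ := by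
  obtain ⟨q, r, hq⟩ := hH
  obtain ⟨ρ, hρ0, hρr⟩ : ∃ ρ : NNReal, 0 < ρ ∧ (ρ : ℝ≥0∞) < r := by
    obtain ⟨ρ, h1, h2⟩ := ENNReal.lt_iff_exists_nnreal_btwn.1 hq.r_pos
    exact ⟨ρ, by exact_mod_cast h1, h2⟩
  have hρ0' : (0 : ℝ) < ρ := hρ0
  have hn : ∀ᶠ x in 𝓝 x₀, dist (γ x) (γ x₀) < ρ :=
    hγ.continuousAt.eventually (Metric.ball_mem_nhds _ hρ0')
  obtain ⟨δ, hδ, hδS⟩ := Metric.nhds_basis_closedBall.mem_iff.1 hn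
  set S := Metric.closedBall x₀ δ with hS
  have hSm : MeasurableSet S := Metric.isClosed_closedBall.measurableSet
  have : CompactSpace S := isCompact_iff_compactSpace.1 (isCompact_closedBall x₀ δ)
  refine ⟨S, Metric.closedBall_mem_nhds _ hδ, hSm, fun μ hμ hμS => ?_⟩
  have hres : μ.restrict S = μ := Measure.restrict_eq_self_of_ae_mem (by
    rw [ae_iff]; exact hμS)
  let ν : Measure S := μ.comap Subtype.val
  have hν : IsFiniteMeasure ν := by
    constructor
    rw [comap_subtype_coe_apply hSm]
    exact measure_lt_top _ _
  let ι : E →L[ℂ] C(S, ℂ × E) := LinearMap.mkContinuous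
    { toFun := fun e => ContinuousMap.const S ((0 : ℂ), e)
      map_add' := by intro a b; ext x <;> simp
      map_smul' := by intro a b; ext x <;> simp } 1 (by
      intro e
      refine (ContinuousMap.norm_le _ (by positivity)).2 fun x => ?_
      simp [Prod.norm_def])
  let ψ₀ : C(S, ℂ × E) := ⟨fun x => (γ x - γ x₀, 0), by fun_prop⟩
  let ψ : E → C(S, ℂ × E) := fun p => ψ₀ + ι (p - p₀)
  have hψx : ∀ p x, ψ p x = (γ x - γ x₀, p - p₀) := by
    intro p x; simp [ψ, ψ₀, ι]
  have hint : ∀ φ : C(S, ℂ), Integrable φ ν := fun φ =>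
    φ.continuous.integrable_of_hasCompactSupport (HasCompactSupport.of_compactSpace _)
  let I : C(S, ℂ) →L[ℂ] ℂ := LinearMap.mkContinuous
    { toFun := fun φ => ∫ x, φ x ∂ν
      map_add' := by
        intro a b
        exact integral_add (hint a) (hint b)
      map_smul' := by
        intro a b
        exact integral_const_mul a _ } (ν.real univ) (by
      intro φ
      refine (norm_integral_le_of_norm_le_const
        (Eventually.of_forall fun x => φ.norm_coe_le_norm x)).trans ?_
      rw [mul_comm])
  have hev : ∀ p ∈ Metric.ball p₀ ρ, ψ p ∈ Metric.eball (0 : C(S, ℂ × E)) r := by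
    intro p hp
    have : ‖ψ p‖ ≤ ρ := by
      refine (ContinuousMap.norm_le _ hρ0'.le).2 fun x => ?_
      rw [hψx, Prod.norm_def]
      have h1 : dist (γ x) (γ x₀) < ρ := hδS x.2
      rw [dist_eq_norm] at h1
      have h2 := Metric.mem_ball.1 hp
      rw [dist_eq_norm] at h2
      exact max_le h1.le h2.le
    rw [Metric.mem_eball, edist_zero_right]
    refine lt_of_le_of_lt ?_ hρr
    rw [enorm_le_coe]
    exact this
  have hval : ∀ p ∈ Metric.ball p₀ ρ, ∀ x : S, (supSeries S q).sum (ψ p) x = H (γ x, p) := by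
    intro p hp x
    rw [supSeries_sum q _ (Metric.eball_subset_eball hq.r_le (hev p hp))]
    have hmem : ψ p x ∈ Metric.eball (0 : ℂ × E) r := by
      have := hev p hp
      rw [Metric.mem_eball, edist_zero_right] at this ⊢
      refine lt_of_le_of_lt ?_ this
      rw [enorm_le_iff_norm_le]
      exact (ψ p).norm_coe_le_norm x
    rw [← hq.sum hmem, hψx]
    simp
  have hIval : ∀ p ∈ Metric.ball p₀ ρ, ∫ x, H (γ x, p) ∂μ = I ((supSeries S q).sum (ψ p)) := by
    intro p hp
    conv_lhs => rw [← hres, ← integral_subtype_comap hSm]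
    exact integral_congr_ae (Eventually.of_forall fun x => (hval p hp x).symm)
  have hball : Metric.ball p₀ (ρ : ℝ) ∈ 𝓝 p₀ := Metric.ball_mem_nhds _ hρ0'
  constructor
  · have hrad : 0 < (supSeries S q).radius := (hq.r_pos.trans_le hq.r_le).trans_le (supSeries_radius S q)
    have h1 : AnalyticAt ℂ (supSeries S q).sum (ψ p₀) :=
      ((supSeries S q).hasFPowerSeriesOnBall hrad).analyticAt_of_mem
        (Metric.eball_subset_eball (hq.r_le.trans (supSeries_radius S q))
          (hev p₀ (Metric.mem_ball_self hρ0')))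
    have h2 : AnalyticAt ℂ ψ p₀ :=
      analyticAt_const.add ((ι.analyticAt _).comp (analyticAt_id.sub analyticAt_const))
    have h3 : AnalyticAt ℂ (fun p => I ((supSeries S q).sum (ψ p))) p₀ :=
      (I.analyticAt _).comp (h1.comp h2)
    refine h3.congr ?_
    filter_upwards [hball] with p hp
    exact (hIval p hp).symm
  · filter_upwards [hball] with p hp
    have h1 := (hint ((supSeries S q).sum (ψ p))).congr (Eventually.of_forall (hval p hp))
    rw [← hres]
    have := (MeasurableEmbedding.subtype_coe hSm).integrable_map_iff (μ := ν)
      (g := fun x => H (γ x, p))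
    rw [show Measure.map Subtype.val ν = μ.restrict S from map_comap_subtype_coe hSm μ] at this
    exact this.2 h1

lemma global_analytic {E : Type*} [NormedAddCommGroup E] [NormedSpace ℂ E]
    (H : ℂ × E → ℂ) (γ : ℝ → ℂ) (hγ : Continuous γ) (p₀ : E) (K : Set ℝ) (hK : IsCompact K)
    (hH : ∀ x ∈ K, AnalyticAt ℂ H (γ x, p₀)) :
    ∃ S, K ⊆ S ∧ MeasurableSet S ∧ ∀ μ : Measure ℝ, IsFiniteMeasure μ → μ Sᶜ = 0 →
      AnalyticAt ℂ (fun p => ∫ x, H (γ x, p) ∂μ) p₀ ∧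
      ∀ᶠ p in 𝓝 p₀, Integrable (fun x => H (γ x, p)) μ := by
  refine hK.induction_on (p := fun K => ∃ S, K ⊆ S ∧ MeasurableSet S ∧
      ∀ μ : Measure ℝ, IsFiniteMeasure μ → μ Sᶜ = 0 →
      AnalyticAt ℂ (fun p => ∫ x, H (γ x, p) ∂μ) p₀ ∧
      ∀ᶠ p in 𝓝 p₀, Integrable (fun x => H (γ x, p)) μ) ?_ ?_ ?_ ?_
  · refine ⟨∅, subset_rfl, MeasurableSet.empty, fun μ _ h => ?_⟩
    have : μ = 0 := by simpa using h
    subst this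
    simp [analyticAt_const]
  · rintro s t hst ⟨S, h1, h2⟩
    exact ⟨S, hst.trans h1, h2⟩
  · rintro s t ⟨S, hsS, hS, h1⟩ ⟨T, htT, hT, h2⟩
    refine ⟨S ∪ T, union_subset_union hsS htT, hS.union hT, fun μ _ hμ => ?_⟩
    obtain ⟨a1, i1⟩ := h1 (μ.restrict S) inferInstance (by
      rw [Measure.restrict_apply hS.compl]; simp)
    obtain ⟨a2, i2⟩ := h2 (μ.restrict Sᶜ) inferInstance (by
      rw [Measure.restrict_apply hT.compl, ← hμ, compl_union, inter_comm])
    have hadd : μ.restrict S + μ.restrict Sᶜ = μ := Measure.restrict_add_restrict_compl hS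
    constructor
    · refine (a1.add a2).congr ?_
      filter_upwards [i1, i2] with p j1 j2
      conv_rhs => rw [← hadd, integral_add_measure j1 j2]
      rfl
    · filter_upwards [i1, i2] with p j1 j2
      rw [← hadd]
      exact j1.add_measure j2
  · intro x hx
    obtain ⟨S, h1, h2⟩ := local_analytic H γ hγ p₀ x (hH x hx)
    exact ⟨S, mem_nhdsWithin_of_mem_nhds h1, S, subset_rfl, h2⟩

lemma circle_analytic {E : Type*} [NormedAddCommGroup E] [NormedSpace ℂ E]
    (H : ℂ × E → ℂ) (r : ℝ) (hr : 0 ≤ r) (p₀ : E)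
    (hH : ∀ z, ‖z‖ = r → AnalyticAt ℂ H (z, p₀)) :
    AnalyticAt ℂ (fun p => ∮ z in C(0, r), H (z, p)) p₀ := by
  have h2pi : (0 : ℝ) ≤ 2 * Real.pi := by positivity
  let H' : ℂ × E → ℂ := fun y => y.1 * Complex.I * H y
  obtain ⟨S, hKS, -, h⟩ := global_analytic H' (circleMap 0 r) (continuous_circleMap 0 r) p₀
    (Icc 0 (2 * Real.pi)) isCompact_Icc (by
      intro x _
      exact (analyticAt_fst.mul analyticAt_const).mul (hH _ (by simp [abs_of_nonneg hr])))
  have := (h (volume.restrict (Ioc 0 (2 * Real.pi))) inferInstance (by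
    have hsub : Sᶜ ⊆ (Ioc 0 (2 * Real.pi))ᶜ :=
      compl_subset_compl.2 (Ioc_subset_Icc_self.trans hKS)
    refine measure_mono_null hsub ?_
    rw [Measure.restrict_apply measurableSet_Ioc.compl]; simp)).1
  refine this.congr (Eventually.of_forall fun p => ?_)
  simp only [circleIntegral, deriv_circleMap, H', smul_eq_mul]
  rw [intervalIntegral.integral_of_le h2pi]

theorem stmt_10 (k : ℕ) (R : ℝ≥0∞) (hR : 0 < R)
    (D : Set ℂ) (hD : D = {t : ℂ | (‖t‖₊ : ℝ≥0∞) < R})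
    (Ω : Set (Fin k → ℂ)) (hΩo : IsOpen Ω) (hΩc : IsConnected Ω)
    (f : ℂ × (Fin k → ℂ) → ℂ)
    (hf : AnalyticOnNhd ℂ f ((D \ {0}) ×ˢ Ω))
    (hext : ∃ V : Set (Fin k → ℂ), V ⊆ Ω ∧ V.Nonempty ∧ IsOpen V ∧
      ∃ F₀ : ℂ × (Fin k → ℂ) → ℂ, AnalyticOnNhd ℂ F₀ (D ×ˢ V) ∧
        ∀ p ∈ (D \ {0}) ×ˢ V, F₀ p = f p) :
    ∃ F : ℂ × (Fin k → ℂ) → ℂ, AnalyticOnNhd ℂ F (D ×ˢ Ω) ∧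
      ∀ p ∈ (D \ {0}) ×ˢ Ω, F p = f p := by
  obtain ⟨V, hVΩ, ⟨v, hv⟩, hVo, F₀, hF₀, hF₀f⟩ := hext
  obtain ⟨r, hr0, hrR⟩ : ∃ r : NNReal, 0 < r ∧ (r : ℝ≥0∞) < R := by
    obtain ⟨ρ, h1, h2⟩ := ENNReal.lt_iff_exists_nnreal_btwn.1 hR
    exact ⟨ρ, by exact_mod_cast h1, h2⟩
  have hr0' : (0 : ℝ) < r := hr0
  have hDr : ∀ t : ℂ, ‖t‖ ≤ r → t ∈ D := by
    intro t ht
    rw [hD]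
    refine lt_of_le_of_lt ?_ hrR
    exact_mod_cast ht
  let G : ℂ × (Fin k → ℂ) → ℂ := fun p =>
    (2 * Real.pi * Complex.I : ℂ)⁻¹ • ∮ z in C(0, r), (z - p.1)⁻¹ • f (z, p.2)
  have hG : ∀ p : ℂ × (Fin k → ℂ), ‖p.1‖ < r → p.2 ∈ Ω → AnalyticAt ℂ G p := by
    intro p hp1 hp2
    suffices h : AnalyticAt ℂ (fun p : ℂ × (Fin k → ℂ) =>
        ∮ z in C(0, r), (z - p.1)⁻¹ • f (z, p.2)) p from
      AnalyticAt.fun_const_smul h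
    refine circle_analytic (fun y : ℂ × (ℂ × (Fin k → ℂ)) => (y.1 - y.2.1)⁻¹ • f (y.1, y.2.2))
      r hr0'.le p ?_
    intro z hz
    have hz0 : z ≠ 0 := by
      rintro rfl; simp at hz; exact hr0'.ne hz
    have e1 : AnalyticAt ℂ (fun y : ℂ × (ℂ × (Fin k → ℂ)) => y.1 - y.2.1) (z, p) :=
      analyticAt_fst.sub (analyticAt_fst.comp analyticAt_snd)
    have e2 : AnalyticAt ℂ (fun y : ℂ × (ℂ × (Fin k → ℂ)) => (y.1 - y.2.1)⁻¹) (z, p) := by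
      refine e1.fun_inv ?_
      intro h
      have : z = p.1 := sub_eq_zero.1 h
      rw [← this, hz] at hp1
      exact lt_irrefl _ hp1
    refine AnalyticAt.fun_smul e2 ?_
    · have hfa : AnalyticAt ℂ f (z, p.2) := hf _ ⟨⟨hDr z hz.le, hz0⟩, hp2⟩
      exact AnalyticAt.fun_comp (g := f) (f := fun y : ℂ × (ℂ × (Fin k → ℂ)) => (y.1, y.2.2)) hfa
        (analyticAt_fst.prod (analyticAt_snd.comp analyticAt_snd))
  have hGV : ∀ t : ℂ, ‖t‖ < r → t ≠ 0 → ∀ w ∈ V, G (t, w) = f (t, w) := by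
    intro t ht ht0 w hw
    rw [← hF₀f (t, w) ⟨⟨hDr t ht.le, ht0⟩, hw⟩]
    have hc : ∀ z : ℂ, ‖z‖ ≤ r → DifferentiableAt ℂ (fun z => F₀ (z, w)) z := by
      intro z hz
      have h1 : AnalyticAt ℂ F₀ (z, w) := hF₀ _ ⟨hDr z hz, hw⟩
      exact (AnalyticAt.fun_comp (g := F₀) (f := fun z : ℂ => (z, w)) h1
        (analyticAt_id.prod analyticAt_const)).differentiableAt
    have := Complex.two_pi_I_inv_smul_circleIntegral_sub_inv_smul_of_differentiable_on_off_countable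
      (R := r) (c := 0) (w := t) (f := fun z => F₀ (z, w)) countable_empty
      (by simpa using ht)
      (fun z hz => (hc z (by simpa using hz)).continuousAt.continuousWithinAt)
      (fun z hz => hc z (by simpa using (Metric.ball_subset_closedBall hz.1)))
    rw [← this]
    simp only [G]
    congr 1
    refine circleIntegral.integral_congr hr0'.le fun z hz => ?_
    have hz : ‖z‖ = r := by simpa using hz
    have hz0 : z ≠ 0 := by
      rintro rfl; simp at hz; exact hr0'.ne hz
    beta_reduce
    rw [hF₀f (z, w) ⟨⟨hDr z hz.le, hz0⟩, hw⟩]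
  have hGf : ∀ t : ℂ, ‖t‖ < r → t ≠ 0 → ∀ w ∈ Ω, G (t, w) = f (t, w) := by
    intro t ht ht0
    refine AnalyticOnNhd.eqOn_of_preconnected_of_eventuallyEq (𝕜 := ℂ)
      (f := fun w => G (t, w)) (g := fun w => f (t, w)) ?_ ?_ hΩc.isPreconnected (hVΩ hv) ?_
    · intro w hw
      exact AnalyticAt.fun_comp (g := G) (f := fun w => (t, w)) (hG (t, w) ht hw)
        (analyticAt_const.prod analyticAt_id)
    · intro w hw
      exact AnalyticAt.fun_comp (g := f) (f := fun w => (t, w)) (hf (t, w) ⟨⟨hDr t ht.le, ht0⟩, hw⟩)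
        (analyticAt_const.prod analyticAt_id)
    · filter_upwards [hVo.mem_nhds hv] with w hw
      exact hGV t ht ht0 w hw
  classical
  refine ⟨fun p => if p.1 = 0 then G p else f p, ?_, ?_⟩
  · rintro ⟨t, w⟩ ⟨ht, hw⟩
    by_cases ht0 : t = 0
    · subst ht0
      refine (hG (0, w) (by simpa using hr0) hw).congr ?_
      have h1 : ∀ᶠ p : ℂ × (Fin k → ℂ) in 𝓝 (0, w), ‖p.1‖ < r := by
        have : Continuous fun p : ℂ × (Fin k → ℂ) => ‖p.1‖ := by fun_prop
        exact this.continuousAt.eventually_lt continuousAt_const (by simpa using hr0)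
      have h2 : ∀ᶠ p : ℂ × (Fin k → ℂ) in 𝓝 (0, w), p.2 ∈ Ω :=
        continuous_snd.continuousAt.eventually (hΩo.mem_nhds hw)
      filter_upwards [h1, h2] with p hp1 hp2
      by_cases hp : p.1 = 0
      · simp [hp]
      · simp only [hp, if_false]
        exact hGf p.1 hp1 hp p.2 hp2
    · refine (hf (t, w) ⟨⟨ht, ht0⟩, hw⟩).congr ?_
      have h1 : ∀ᶠ p : ℂ × (Fin k → ℂ) in 𝓝 (t, w), p.1 ≠ 0 :=
        continuous_fst.continuousAt.eventually_ne ht0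
      filter_upwards [h1] with p hp
      simp [hp]
  · rintro p ⟨⟨_, hp⟩, _⟩
    have : p.1 ≠ 0 := hp
    simp [this]
end

section
/- Let n ≥ 1 and k ≥ 0, and let f be a holomorphic function on {t ∈ ℂⁿ : t_i ≠ 0 for all i} × ℂᵏ that is not identically zero. Suppose that for each j ∈ {1, …, n} there exists an integer ℓ_j such that the function (t, w) ↦ t_j^{−ℓ_j} f(t, w) extends holomorphically to {t ∈ ℂⁿ : t_i ≠ 0 for all i ≠ j} × ℂᵏ. Then there exists a (unique) vector ℓ⃗_f ∈ ℤⁿ such that, for every ℓ⃗ ∈ ℤⁿ, the function (t, w) ↦ t₁^{−ℓ₁}⋯tₙ^{−ℓₙ} f(t, w) extends holomorphically to ℂⁿ × ℂᵏ if and only if ℓ_j ≤ (ℓ⃗_f)_j for every j. -/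
section Helpers

open Filter Topology Set

/-- Local version of analyticity of parametric integrals. -/
lemma local_param {E : Type*} [NormedAddCommGroup E] [NormedSpace ℂ E]
    (G : E → ℂ) (γ : ℝ → E) (hγ : Continuous γ) (θ₀ : ℝ) (hG : AnalyticAt ℂ G (γ θ₀)) :
    ∃ ε > 0, ∀ a ∈ Metric.ball θ₀ ε, ∀ b ∈ Metric.ball θ₀ ε,
      AnalyticAt ℂ (fun v : E => ∫ θ in a..b, G (γ θ + v)) 0 ∧
      ∀ᶠ v in 𝓝 (0 : E), IntervalIntegrable (fun θ => G (γ θ + v)) MeasureTheory.volume a b := by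
  obtain ⟨P, r, hP⟩ := hG
  obtain ⟨ρ', hρ'0, hρ'r⟩ := ENNReal.lt_iff_exists_nnreal_btwn.1 hP.r_pos
  set ρ : NNReal := ρ' / 2 with hρ
  have hρ0 : 0 < ρ := by
    have : 0 < ρ' := by exact_mod_cast hρ'0
    positivity
  have hρρ : (ρ : ENNReal) + ρ < r := by
    have : (ρ : ENNReal) + ρ = ρ' := by
      rw [← ENNReal.coe_add, hρ, add_halves]
    rwa [this]
  have hρr : (ρ : ENNReal) < r := lt_of_le_of_lt le_self_add hρρ
  obtain ⟨ε, hε, hγε⟩ := Metric.continuousAt_iff.1 (hγ.continuousAt (x := θ₀)) ρ (by exact_mod_cast hρ0)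
  refine ⟨ε, hε, fun a ha b hb => ?_⟩
  have hsub : uIcc a b ⊆ Metric.ball θ₀ ε := by
    rw [← segment_eq_uIcc]; exact (convex_ball θ₀ ε).segment_subset ha hb
  have hy : ∀ θ ∈ uIcc a b, ‖γ θ - γ θ₀‖₊ < ρ := by
    intro θ hθ
    have := hγε (hsub hθ)
    rw [dist_eq_norm] at this
    exact_mod_cast this
  -- continuity
  have hcont : ∀ v : E, ‖v‖₊ < ρ → ContinuousOn (fun θ => G (γ θ + v)) (uIcc a b) := by
    intro v hv
    refine hP.continuousOn.comp (by fun_prop) ?_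
    intro θ hθ
    simp only [Metric.mem_eball, edist_eq_enorm_sub]
    calc ‖γ θ + v - γ θ₀‖ₑ = ‖(γ θ - γ θ₀) + v‖ₑ := by congr 1; abel
      _ ≤ ‖γ θ - γ θ₀‖ₑ + ‖v‖ₑ := enorm_add_le _ _
      _ ≤ ρ + ρ := by
        gcongr
        · exact ENNReal.coe_le_coe.2 (hy θ hθ).le
        · exact ENNReal.coe_le_coe.2 hv.le
      _ < r := hρρ
  have hnear : ∀ᶠ v in 𝓝 (0 : E), ‖v‖₊ < ρ := by
    have : Metric.ball (0 : E) ρ ∈ 𝓝 (0 : E) := Metric.ball_mem_nhds _ (by exact_mod_cast hρ0)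
    filter_upwards [this] with v hv
    rw [mem_ball_zero_iff] at hv
    exact_mod_cast hv
  refine ⟨?_, hnear.mono fun v hv => (hcont v hv).intervalIntegrable⟩
  -- coefficient functions
  set q : ℝ → FormalMultilinearSeries ℂ E ℂ := fun θ => P.changeOrigin (γ θ - γ θ₀) with hq
  have hqc : ∀ n, ContinuousOn (fun θ => q θ n) (uIcc a b) := by
    intro n
    have h1 := P.hasFPowerSeriesOnBall_changeOrigin n (hP.r_pos.trans_le hP.r_le)
    refine h1.continuousOn.comp (f := fun θ => γ θ - γ θ₀) (by fun_prop) ?_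
    intro θ hθ
    simp only [Metric.mem_eball, edist_zero_right]
    exact (ENNReal.coe_lt_coe.2 (hy θ hθ)).trans (hρr.trans_le hP.r_le)
  -- bound
  have hs := P.changeOriginSeries_summable_aux₁ (hρρ.trans_le hP.r_le)
  set A : ℕ → NNReal := fun k => ∑' s : (l : ℕ) × { s : Finset (Fin (k + l)) // s.card = l },
    ‖P (k + s.fst)‖₊ * ρ ^ s.fst * ρ ^ k with hA
  have hAs : Summable A := by
    have := (NNReal.summable_sigma.1 hs).2
    exact this
  have hqA : ∀ θ ∈ uIcc a b, ∀ n, ‖q θ n‖₊ * ρ ^ n ≤ A n := by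
    intro θ hθ n
    have h1 := P.nnnorm_changeOrigin_le (x := γ θ - γ θ₀) n
      ((ENNReal.coe_lt_coe.2 (hy θ hθ)).trans (hρr.trans_le hP.r_le))
    have h2 := (NNReal.summable_sigma.1 hs).1 n
    have h3 := P.changeOriginSeries_summable_aux₂ (hρr.trans_le hP.r_le) n
    calc ‖q θ n‖₊ * ρ ^ n ≤ (∑' s : (l : ℕ) × { s : Finset (Fin (n + l)) // s.card = l },
          ‖P (n + s.fst)‖₊ * ρ ^ s.fst) * ρ ^ n := by
          gcongr
          refine h1.trans ?_
          refine Summable.tsum_le_tsum (fun s => ?_) ?_ h3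
          · gcongr
            exact (hy θ hθ).le
          · refine NNReal.summable_of_le (fun s => ?_) h3
            gcongr
            exact (hy θ hθ).le
      _ = A n := by rw [hA, ← NNReal.tsum_mul_right]
  have hqA' : ∀ θ ∈ uIcc a b, ∀ n, ‖q θ n‖ * (ρ : ℝ) ^ n ≤ A n := fun θ hθ n => by
    exact_mod_cast hqA θ hθ n
  have hρR : (0 : ℝ) < ρ := by exact_mod_cast hρ0
  let p : FormalMultilinearSeries ℂ E ℂ := fun n => ∫ θ in a..b, q θ n
  have hrad : (ρ : ENNReal) ≤ p.radius := by
    obtain ⟨C, hC⟩ : ∃ C : NNReal, ∀ n, A n ≤ C := ⟨∑' n, A n, fun n => hAs.le_tsum n (by simp)⟩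
    refine p.le_radius_of_bound (C * |b - a|) (fun n => ?_)
    have : ‖p n‖ ≤ (C / (ρ : ℝ) ^ n) * |b - a| := by
      refine intervalIntegral.norm_integral_le_of_norm_le_const fun θ hθ => ?_
      rw [le_div_iff₀ (by positivity)]
      exact (hqA' θ (uIoc_subset_uIcc hθ) n).trans (by exact_mod_cast hC n)
    calc ‖p n‖ * (ρ : ℝ) ^ n ≤ (C / (ρ : ℝ) ^ n) * |b - a| * (ρ : ℝ) ^ n := by gcongr
      _ = C * |b - a| := by field_simp
  refine ⟨p, ρ, hrad, by exact_mod_cast hρ0, ?_⟩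
  intro v hv
  have hvρ : ‖v‖₊ < ρ := by
    simp only [Metric.mem_eball, edist_zero_right] at hv
    exact ENNReal.coe_lt_coe.1 hv
  have hvρ' : ‖v‖ ≤ ρ := by exact_mod_cast hvρ.le
  have happ : ∀ n, (p n fun _ => v) = ∫ θ in a..b, q θ n fun _ => v := by
    intro n
    have hi : IntervalIntegrable (fun θ => q θ n) MeasureTheory.volume a b :=
      (hqc n).intervalIntegrable
    simp only [p, intervalIntegral]
    rw [sub_apply, ContinuousMultilinearMap.integral_apply hi.1,
      ContinuousMultilinearMap.integral_apply hi.2]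
  simp only [happ, zero_add]
  have hAs' : Summable fun n => (A n : ℝ) := NNReal.summable_coe.2 hAs
  refine intervalIntegral.hasSum_integral_of_dominated_convergence (fun n _ => (A n : ℝ))
    ?_ ?_ ?_ ?_ ?_
  · intro n
    have : ContinuousOn (fun θ => q θ n fun _ => v) (uIcc a b) :=
      (ContinuousMultilinearMap.apply ℂ (fun _ : Fin n => E) ℂ (fun _ => v)).continuous.comp_continuousOn
        (hqc n)
    exact (this.mono uIoc_subset_uIcc).aestronglyMeasurable measurableSet_uIoc
  · intro n
    refine Eventually.of_forall fun θ hθ => ?_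
    calc ‖q θ n fun _ => v‖ ≤ ‖q θ n‖ * ‖v‖ ^ n := by
          simpa using (q θ n).le_opNorm (fun _ => v)
      _ ≤ ‖q θ n‖ * (ρ : ℝ) ^ n := by gcongr
      _ ≤ A n := hqA' θ (uIoc_subset_uIcc hθ) n
  · exact Eventually.of_forall fun θ hθ => hAs'
  · exact intervalIntegrable_const
  · refine Eventually.of_forall fun θ hθ => ?_
    have hyθ := hy θ (uIoc_subset_uIcc hθ)
    have h1 := hP.changeOrigin (y := γ θ - γ θ₀) ((ENNReal.coe_lt_coe.2 hyθ).trans hρr)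
    rw [add_sub_cancel] at h1
    refine h1.hasSum ?_
    simp only [Metric.mem_eball, edist_zero_right]
    refine lt_of_lt_of_le (ENNReal.coe_lt_coe.2 hvρ) ?_
    refine ENNReal.le_sub_of_add_le_left ENNReal.coe_ne_top ?_
    refine le_trans ?_ hρρ.le
    gcongr

lemma param_interval {E : Type*} [NormedAddCommGroup E] [NormedSpace ℂ E]
    (G : E → ℂ) (γ : ℝ → E) (hγ : Continuous γ) (a b : ℝ) (hab : a ≤ b)
    (hG : ∀ θ ∈ Icc a b, AnalyticAt ℂ G (γ θ)) :
    AnalyticAt ℂ (fun v : E => ∫ θ in a..b, G (γ θ + v)) 0 := by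
  have H := fun θ : Icc a b => local_param G γ hγ θ (hG θ θ.2)
  choose ε hε H using H
  obtain ⟨t, ht0, htm, ⟨m, hm⟩, ht⟩ := exists_monotone_Icc_subset_open_cover_Icc hab
    (c := fun θ : Icc a b => Metric.ball θ (ε θ)) (fun _ => Metric.isOpen_ball)
    (fun θ _ => mem_iUnion.2 ⟨θ, Metric.mem_ball_self (hε θ)⟩)
  have key : ∀ n, AnalyticAt ℂ (fun v : E => ∫ θ in (t n : ℝ)..(t (n+1) : ℝ), G (γ θ + v)) 0 ∧
      ∀ᶠ v in 𝓝 (0 : E), IntervalIntegrable (fun θ => G (γ θ + v)) MeasureTheory.volume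
        (t n : ℝ) (t (n+1) : ℝ) := by
    intro n
    obtain ⟨i, hi⟩ := ht n
    exact H i _ (hi ⟨le_rfl, htm n.le_succ⟩) _ (hi ⟨htm n.le_succ, le_rfl⟩)
  have h1 : AnalyticAt ℂ (fun v : E => ∑ n ∈ Finset.range m,
      ∫ θ in (t n : ℝ)..(t (n+1) : ℝ), G (γ θ + v)) 0 :=
    Finset.analyticAt_fun_sum _ fun n _ => (key n).1
  refine h1.congr ?_
  have h2 : ∀ᶠ v in 𝓝 (0 : E), ∀ n ∈ Finset.range m, IntervalIntegrable (fun θ => G (γ θ + v))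
      MeasureTheory.volume (t n : ℝ) (t (n+1) : ℝ) :=
    (Finset.eventually_all _).2 fun n _ => (key n).2
  filter_upwards [h2] with v hv
  rw [intervalIntegral.sum_integral_adjacent_intervals (a := fun n => (t n : ℝ))
    (fun k hk => hv k (Finset.mem_range.2 hk)), ht0, hm m le_rfl]

lemma param_circle {X : Type*} [NormedAddCommGroup X] [NormedSpace ℂ X]
    (G : X × ℂ → ℂ) (x₀ : X) (hG : ∀ s ∈ Metric.sphere (0 : ℂ) 1, AnalyticAt ℂ G (x₀, s)) :
    AnalyticAt ℂ (fun x : X => ∮ s in C(0, 1), G (x, s)) x₀ := by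
  have h := param_interval (fun p : X × ℂ => p.2 * Complex.I * G p)
    (fun θ => (x₀, circleMap 0 1 θ)) (by fun_prop) 0 (2 * Real.pi) (by positivity)
    (fun θ _ => (analyticAt_snd.mul analyticAt_const).mul
      (hG _ (circleMap_mem_sphere 0 zero_le_one θ)))
  have hl : AnalyticAt ℂ (fun x : X => ((x - x₀, 0) : X × ℂ)) x₀ :=
    AnalyticAt.prod (by fun_prop) analyticAt_const
  have h0 : ((x₀ - x₀, 0) : X × ℂ) = 0 := by simp
  rw [← h0] at h
  have h2 := AnalyticAt.fun_comp (f := fun x : X => ((x - x₀, 0) : X × ℂ)) (x := x₀) h hl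
  refine h2.congr (Eventually.of_forall fun x => ?_)
  simp [circleIntegral]

/-- Replace the `j`-th base coordinate. -/
def updC {n k : ℕ} (j : Fin n) (p : (Fin n → ℂ) × (Fin k → ℂ)) (s : ℂ) :
    (Fin n → ℂ) × (Fin k → ℂ) := (Function.update p.1 j s, p.2)

lemma updC_analytic {n k : ℕ} (j : Fin n) (q : ((Fin n → ℂ) × (Fin k → ℂ)) × ℂ) :
    AnalyticAt ℂ (fun q : ((Fin n → ℂ) × (Fin k → ℂ)) × ℂ => updC j q.1 q.2) q := by
  unfold updC
  refine AnalyticAt.prod ?_ (((ContinuousLinearMap.snd ℂ (Fin n → ℂ) (Fin k → ℂ)).comp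
    (ContinuousLinearMap.fst ℂ _ ℂ)).analyticAt q)
  refine AnalyticAt.pi (f := fun i (q : ((Fin n → ℂ) × (Fin k → ℂ)) × ℂ) =>
    Function.update q.1.1 j q.2 i) fun i => ?_
  by_cases h : i = j
  · subst h
    simp only [Function.update_self]
    exact analyticAt_snd
  · simp only [Function.update_of_ne h]
    exact ((ContinuousLinearMap.proj (R := ℂ) (φ := fun _ : Fin n => ℂ) i).comp
      ((ContinuousLinearMap.fst ℂ (Fin n → ℂ) (Fin k → ℂ)).comp
        (ContinuousLinearMap.fst ℂ _ ℂ))).analyticAt q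

lemma updC_slice {n k : ℕ} (j : Fin n) (p : (Fin n → ℂ) × (Fin k → ℂ)) (s : ℂ) :
    AnalyticAt ℂ (fun s => updC j p s) s :=
  AnalyticAt.fun_comp (f := fun s : ℂ => (p, s)) (x := s) (updC_analytic j (p, s))
    (analyticAt_const.prod analyticAt_id)

lemma updC_self {n k : ℕ} (j : Fin n) (p : (Fin n → ℂ) × (Fin k → ℂ)) :
    updC j p (p.1 j) = p := by simp [updC]

lemma coord_analytic {n k : ℕ} (i : Fin n) (p : (Fin n → ℂ) × (Fin k → ℂ)) :
    AnalyticAt ℂ (fun p : (Fin n → ℂ) × (Fin k → ℂ) => p.1 i) p :=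
  ((ContinuousLinearMap.proj (R := ℂ) (φ := fun _ : Fin n => ℂ) i).comp
      (ContinuousLinearMap.fst ℂ (Fin n → ℂ) (Fin k → ℂ))).analyticAt p

/-- points whose base coordinates outside `A` are nonzero -/
def regSet (n k : ℕ) (A : Finset (Fin n)) : Set ((Fin n → ℂ) × (Fin k → ℂ)) :=
  {p | ∀ i, i ∉ A → p.1 i ≠ 0}

lemma regSet_open (n k : ℕ) (A : Finset (Fin n)) : IsOpen (regSet n k A) := by
  have : regSet n k A = ⋂ i : Fin n, {p | i ∉ A → p.1 i ≠ 0} := by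
    ext p; simp [regSet]
  rw [this]
  refine isOpen_iInter_of_finite fun i => ?_
  by_cases h : i ∈ A
  · simp [h]
  · simp only [h, not_false_eq_true, forall_const]
    exact isOpen_ne_fun (by fun_prop) (by fun_prop)

lemma regSet_dense (n k : ℕ) : Dense (regSet n k ∅) := by
  have h1 : Dense ((univ : Set (Fin n)).pi fun _ => ({0}ᶜ : Set ℂ)) :=
    dense_pi _ fun i _ => dense_compl_singleton 0
  have h2 := h1.prod (dense_univ (X := Fin k → ℂ))
  convert h2 using 1
  ext p
  simp [regSet]

/-- Hartogs-type extension step. -/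
lemma step {n k : ℕ} (A : Finset (Fin n)) (j : Fin n) (hj : j ∉ A)
    (g GA Gj : ((Fin n → ℂ) × (Fin k → ℂ)) → ℂ)
    (hGA : AnalyticOnNhd ℂ GA (regSet n k A)) (hGA' : ∀ p ∈ regSet n k ∅, GA p = g p)
    (hGj : AnalyticOnNhd ℂ Gj (regSet n k {j})) (hGj' : ∀ p ∈ regSet n k ∅, Gj p = g p) :
    ∃ F, AnalyticOnNhd ℂ F (regSet n k (insert j A)) ∧ ∀ p ∈ regSet n k ∅, F p = g p := by
  classical
  set H : ((Fin n → ℂ) × (Fin k → ℂ)) → ℂ := fun p =>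
    (2 * Real.pi * Complex.I)⁻¹ * ∮ s in C(0, 1), (s - p.1 j)⁻¹ * GA (updC j p s) with hH
  have hsph : ∀ s ∈ Metric.sphere (0 : ℂ) 1, s ≠ 0 := by
    rintro s hs rfl
    simp at hs
  -- analyticity of H
  have hHa : ∀ p ∈ regSet n k (insert j A), ‖p.1 j‖ < 1 → AnalyticAt ℂ H p := by
    intro p hp hpj
    refine analyticAt_const.mul ?_
    refine param_circle (fun q : ((Fin n → ℂ) × (Fin k → ℂ)) × ℂ =>
      (q.2 - q.1.1 j)⁻¹ * GA (updC j q.1 q.2)) p fun s hs => ?_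
    refine AnalyticAt.mul ?_ ?_
    · refine AnalyticAt.fun_inv (analyticAt_snd.fun_sub ?_) ?_
      · exact AnalyticAt.fun_comp (f := fun q : ((Fin n → ℂ) × (Fin k → ℂ)) × ℂ => q.1)
          (x := (p, s)) (coord_analytic j p) analyticAt_fst
      · simp only
        intro h
        rw [sub_eq_zero] at h
        rw [← h] at hpj
        simp at hs
        linarith
    · refine AnalyticAt.fun_comp (f := fun q : ((Fin n → ℂ) × (Fin k → ℂ)) × ℂ => updC j q.1 q.2)
          (x := (p, s)) (hGA _ ?_) (updC_analytic j _)
      intro i hi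
      by_cases h : i = j
      · subst h
        simpa [updC] using hsph s hs
      · simpa [updC, h] using hp i (by simp [h, hi])
  -- H = g on generic points
  have hHg : ∀ p ∈ regSet n k ∅, ‖p.1 j‖ < 1 → H p = g p := by
    intro p hp hpj
    have h1 : ∀ s, AnalyticAt ℂ (fun s => Gj (updC j p s)) s := by
      intro s
      refine AnalyticAt.fun_comp (f := fun s => updC j p s) (x := s) (hGj _ ?_) (updC_slice j p s)
      intro i hi
      have : i ≠ j := by simpa using hi
      simpa [updC, this] using hp i (by simp)
    have h2 := DifferentiableOn.circleIntegral_sub_inv_smul (R := 1) (c := 0) (w := p.1 j)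
      (f := fun s => Gj (updC j p s)) (fun s _ => (h1 s).differentiableAt.differentiableWithinAt)
      (by simpa using hpj)
    have h3 : (∮ s in C(0, 1), (s - p.1 j)⁻¹ * GA (updC j p s)) =
        ∮ s in C(0, 1), (s - p.1 j)⁻¹ • Gj (updC j p s) := by
      refine circleIntegral.integral_congr zero_le_one fun s hs => ?_
      have : updC j p s ∈ regSet n k ∅ := by
        intro i _
        by_cases h : i = j
        · subst h
          simpa [updC] using hsph s hs
        · simpa [updC, h] using hp i (by simp)
      simp only [smul_eq_mul]
      rw [hGA' _ this, hGj' _ this]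
    simp only [hH]
    rw [h3, h2, updC_self, hGj' p hp, smul_eq_mul, inv_mul_cancel_left₀]
    exact Complex.two_pi_I_ne_zero
  have hsubA : ∀ p ∈ regSet n k (insert j A), p.1 j ≠ 0 → p ∈ regSet n k A := by
    intro p hp hpj i hi
    by_cases h : i = j
    · subst h; exact hpj
    · exact hp i (by simp [h, hi])
  have hopen1 : IsOpen {p : (Fin n → ℂ) × (Fin k → ℂ) | ‖p.1 j‖ < 1} :=
    isOpen_lt (by fun_prop) (by fun_prop)
  have hopen2 : IsOpen {p : (Fin n → ℂ) × (Fin k → ℂ) | p.1 j ≠ 0} :=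
    isOpen_ne_fun (by fun_prop) (by fun_prop)
  -- H = GA
  have hHGA : ∀ p ∈ regSet n k (insert j A), ‖p.1 j‖ < 1 → p.1 j ≠ 0 → H p = GA p := by
    intro p hp hpj hpj0
    refine tendsto_nhds_unique_of_frequently_eq (hHa p hp hpj).continuousAt
      (hGA p (hsubA p hp hpj0)).continuousAt ?_
    have h1 := mem_closure_iff_frequently.1 (regSet_dense n k p)
    refine (h1.and_eventually (hopen1.mem_nhds hpj)).mono ?_
    rintro x ⟨hx, hx1⟩
    rw [hHg x hx hx1, hGA' x hx]
  refine ⟨fun p => if p.1 j = 0 then H p else GA p, ?_, ?_⟩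
  · intro p hp
    by_cases hpj : p.1 j = 0
    · have hp1 : ‖p.1 j‖ < 1 := by simp [hpj]
      refine (hHa p hp hp1).congr ?_
      filter_upwards [hopen1.mem_nhds hp1, (regSet_open n k _).mem_nhds hp] with x hx1 hx
      split_ifs with h
      · rfl
      · exact hHGA x hx hx1 h
    · refine (hGA p (hsubA p hp hpj)).congr ?_
      filter_upwards [hopen2.mem_nhds hpj] with x hx
      rw [if_neg hx]
  · intro p hp
    simp only
    rw [if_neg (hp j (by simp)), hGA' p hp]

lemma hartogs {n k : ℕ} (g : ((Fin n → ℂ) × (Fin k → ℂ)) → ℂ)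
    (hg : AnalyticOnNhd ℂ g (regSet n k ∅))
    (h : ∀ j, ∃ F, AnalyticOnNhd ℂ F (regSet n k {j}) ∧ ∀ p ∈ regSet n k ∅, F p = g p) :
    ∃ F, AnalyticOnNhd ℂ F univ ∧ ∀ p ∈ regSet n k ∅, F p = g p := by
  classical
  have key : ∀ A : Finset (Fin n),
      ∃ F, AnalyticOnNhd ℂ F (regSet n k A) ∧ ∀ p ∈ regSet n k ∅, F p = g p := by
    intro A
    induction A using Finset.induction_on with
    | empty => exact ⟨g, hg, fun _ _ => rfl⟩
    | insert j A hj ih =>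
      obtain ⟨GA, h1, h2⟩ := ih
      obtain ⟨Gj, h3, h4⟩ := h j
      exact step A j hj g GA Gj h1 h2 h3 h4
  have hu : regSet n k Finset.univ = univ := by ext p; simp [regSet]
  rw [← hu]
  exact key _

/-- extendability of `t_j^{-l} f` across the `j`-th divisor -/
def ExtJ {n k : ℕ} (f : ((Fin n → ℂ) × (Fin k → ℂ)) → ℂ) (j : Fin n) (l : ℤ) : Prop :=
  ∃ F, AnalyticOnNhd ℂ F (regSet n k {j}) ∧ ∀ p ∈ regSet n k ∅, F p = p.1 j ^ (-l) * f p

lemma ExtJ.mono {n k : ℕ} {f : ((Fin n → ℂ) × (Fin k → ℂ)) → ℂ} {j : Fin n} {l l' : ℤ}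
    (h : ExtJ f j l) (hl : l' ≤ l) : ExtJ f j l' := by
  obtain ⟨F, hF, hF'⟩ := h
  obtain ⟨m, hm⟩ := Int.eq_ofNat_of_zero_le (sub_nonneg.2 hl)
  refine ⟨fun p => p.1 j ^ m * F p, fun p hp => ((coord_analytic j p).fun_pow m).mul (hF p hp), ?_⟩
  intro p hp
  have h0 : p.1 j ≠ 0 := hp j (by simp)
  simp only
  rw [hF' p hp, ← mul_assoc, ← zpow_natCast, ← zpow_add₀ h0]
  congr 2
  have : (m : ℤ) = l - l' := hm.symm
  omega

lemma ExtJ.bdd {n k : ℕ} {f : ((Fin n → ℂ) × (Fin k → ℂ)) → ℂ} {j : Fin n} {l₀ : ℤ}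
    (h : ExtJ f j l₀) (hnz : ∃ p ∈ regSet n k ∅, f p ≠ 0) :
    ∃ b, ∀ l, ExtJ f j l → l ≤ b := by
  obtain ⟨p, hp, hfp⟩ := hnz
  obtain ⟨F₀, hF₀, hF₀'⟩ := h
  have hmem : ∀ s, updC j p s ∈ regSet n k {j} := by
    intro s i hi
    have : i ≠ j := by simpa using hi
    simpa [updC, this] using hp i (by simp)
  have hmem' : ∀ s, s ≠ 0 → updC j p s ∈ regSet n k ∅ := by
    intro s hs i _
    by_cases h : i = j
    · subst h
      simpa [updC] using hs
    · simpa [updC, h] using hp i (by simp)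
  have hcoord : ∀ s, (updC j p s).1 j = s := fun s => by simp [updC]
  have han : ∀ F : ((Fin n → ℂ) × (Fin k → ℂ)) → ℂ, AnalyticOnNhd ℂ F (regSet n k {j}) →
      ∀ s, AnalyticAt ℂ (fun s => F (updC j p s)) s := fun F hF s =>
    AnalyticAt.fun_comp (f := fun s => updC j p s) (x := s) (hF _ (hmem s)) (updC_slice j p s)
  have hpj : p.1 j ≠ 0 := hp j (by simp)
  have hne : F₀ (updC j p (p.1 j)) ≠ 0 := by
    rw [updC_self, hF₀' p hp]
    exact mul_ne_zero (zpow_ne_zero _ hpj) hfp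
  have hord : analyticOrderAt (fun s => F₀ (updC j p s)) 0 ≠ ⊤ := by
    intro htop
    rw [analyticOrderAt_eq_top] at htop
    have := AnalyticOnNhd.eqOn_zero_of_preconnected_of_eventuallyEq_zero (U := univ) (𝕜 := ℂ)
      (f := fun s => F₀ (updC j p s))
      (fun s _ => han F₀ hF₀ s) isPreconnected_univ (mem_univ 0) htop (mem_univ (p.1 j))
    exact hne this
  obtain ⟨N, hN⟩ := ENat.ne_top_iff_exists.1 hord
  refine ⟨l₀ + N, fun l hl => ?_⟩
  by_contra hlt
  push Not at hlt
  obtain ⟨m, hm⟩ := Int.eq_ofNat_of_zero_le (a := l - l₀) (by omega)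
  obtain ⟨F, hF, hF'⟩ := hl
  have heq : ∀ s, s ≠ 0 → F₀ (updC j p s) = s ^ m * F (updC j p s) := by
    intro s hs
    rw [hF₀' _ (hmem' s hs), hF' _ (hmem' s hs), hcoord, ← mul_assoc, ← zpow_natCast,
      ← zpow_add₀ hs]
    congr 2
    have : (m : ℤ) = l - l₀ := hm.symm
    omega
  have heq0 : F₀ (updC j p 0) = 0 ^ m * F (updC j p 0) := by
    have h1 : Tendsto (fun s => F₀ (updC j p s)) (𝓝[≠] 0) (𝓝 (F₀ (updC j p 0))) :=
      (han F₀ hF₀ 0).continuousAt.tendsto.mono_left nhdsWithin_le_nhds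
    have h2 : Tendsto (fun s => s ^ m * F (updC j p s)) (𝓝[≠] 0) (𝓝 (0 ^ m * F (updC j p 0))) :=
      (((analyticAt_id (𝕜 := ℂ) (z := (0:ℂ))).fun_pow m).mul
        (han F hF 0)).continuousAt.tendsto.mono_left nhdsWithin_le_nhds
    refine tendsto_nhds_unique_of_eventuallyEq h1 h2 ?_
    filter_upwards [self_mem_nhdsWithin] with s hs using heq s hs
  have hle : (m : ℕ∞) ≤ analyticOrderAt (fun s => F₀ (updC j p s)) 0 := by
    rw [natCast_le_analyticOrderAt (han F₀ hF₀ 0)]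
    refine ⟨fun s => F (updC j p s), han F hF 0, Eventually.of_forall fun s => ?_⟩
    by_cases hs : s = 0
    · subst hs; simpa using heq0
    · simpa using heq s hs
  rw [← hN] at hle
  have : m ≤ N := by exact_mod_cast hle
  have : (m : ℤ) = l - l₀ := hm.symm
  omega

lemma zprod_analytic {n k : ℕ} (j : Fin n) (l : Fin n → ℤ) (p : (Fin n → ℂ) × (Fin k → ℂ))
    (hp : p ∈ regSet n k {j}) :
    AnalyticAt ℂ (fun p : (Fin n → ℂ) × (Fin k → ℂ) =>
      ∏ i ∈ Finset.univ.erase j, p.1 i ^ (l i)) p :=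
  Finset.analyticAt_fun_prod _ fun i hi => (coord_analytic i p).fun_zpow
    (hp i (by simpa using hi))

lemma main_iff {n k : ℕ} (f : ((Fin n → ℂ) × (Fin k → ℂ)) → ℂ)
    (hf : AnalyticOnNhd ℂ f (regSet n k ∅)) (l : Fin n → ℤ) :
    (∃ F, AnalyticOnNhd ℂ F univ ∧ ∀ p ∈ regSet n k ∅, F p = (∏ i, p.1 i ^ (-(l i))) * f p) ↔
      ∀ j, ExtJ f j (l j) := by
  classical
  constructor
  · rintro ⟨F, hF, hF'⟩ j
    refine ⟨fun p => (∏ i ∈ Finset.univ.erase j, p.1 i ^ (l i)) * F p,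
      fun p hp => (zprod_analytic j l p hp).mul (hF p (mem_univ _)), fun p hp => ?_⟩
    simp only
    rw [hF' p hp, ← Finset.mul_prod_erase Finset.univ _ (Finset.mem_univ j)]
    have h1 : (∏ i ∈ Finset.univ.erase j, p.1 i ^ (l i)) *
        (∏ i ∈ Finset.univ.erase j, p.1 i ^ (-(l i))) = 1 := by
      rw [← Finset.prod_mul_distrib]
      refine Finset.prod_eq_one fun i _ => ?_
      rw [← zpow_add₀ (hp i (by simp))]
      simp
    linear_combination (p.1 j ^ (-(l j)) * f p) * h1
  · intro h
    refine hartogs (fun p => (∏ i, p.1 i ^ (-(l i))) * f p) ?_ ?_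
    · intro p hp
      exact (Finset.analyticAt_fun_prod _ fun i _ => (coord_analytic i p).fun_zpow
        (hp i (by simp))).mul (hf p hp)
    · intro j
      obtain ⟨F, hF, hF'⟩ := h j
      refine ⟨fun p => (∏ i ∈ Finset.univ.erase j, p.1 i ^ (-(l i))) * F p,
        fun p hp => (zprod_analytic j (fun i => -(l i)) p hp).mul (hF p hp), fun p hp => ?_⟩
      simp only
      rw [hF' p hp, ← Finset.mul_prod_erase Finset.univ _ (Finset.mem_univ j)]
      ring

end Helpers

/-- criterion (eq:Fl) for the trivial family ℂⁿ × ℂᵏ → ℂⁿ: for a nonzero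
holomorphic f on the regular part, admitting for each coordinate some extendable twist,
there is a unique ℓ-vector ℓ⃗_f ∈ ℤⁿ such that t^{−ℓ⃗} f extends holomorphically to
ℂⁿ × ℂᵏ exactly when ℓ⃗ ≤ ℓ⃗_f componentwise. -/
theorem stmt_14 (n k : ℕ) (hn : 1 ≤ n)
    (f : ((Fin n → ℂ) × (Fin k → ℂ)) → ℂ)
    (hf : AnalyticOnNhd ℂ f
      ({t : Fin n → ℂ | ∀ i, t i ≠ 0} ×ˢ (Set.univ : Set (Fin k → ℂ))))
    (hnz : ∃ p ∈ {t : Fin n → ℂ | ∀ i, t i ≠ 0} ×ˢ (Set.univ : Set (Fin k → ℂ)),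
      f p ≠ 0)
    (hex : ∀ j : Fin n, ∃ lj : ℤ, ∃ F : ((Fin n → ℂ) × (Fin k → ℂ)) → ℂ,
      AnalyticOnNhd ℂ F
        ({t : Fin n → ℂ | ∀ i, i ≠ j → t i ≠ 0} ×ˢ (Set.univ : Set (Fin k → ℂ))) ∧
      ∀ p ∈ {t : Fin n → ℂ | ∀ i, t i ≠ 0} ×ˢ (Set.univ : Set (Fin k → ℂ)),
        F p = p.1 j ^ (-lj) * f p) :
    ∃! lf : Fin n → ℤ, ∀ l : Fin n → ℤ,
      (∃ F : ((Fin n → ℂ) × (Fin k → ℂ)) → ℂ,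
        AnalyticOnNhd ℂ F (Set.univ : Set ((Fin n → ℂ) × (Fin k → ℂ))) ∧
        ∀ p ∈ {t : Fin n → ℂ | ∀ i, t i ≠ 0} ×ˢ (Set.univ : Set (Fin k → ℂ)),
          F p = (∏ i, p.1 i ^ (-(l i))) * f p) ↔ ∀ j, l j ≤ lf j := by
  have e0 : {t : Fin n → ℂ | ∀ i, t i ≠ 0} ×ˢ (Set.univ : Set (Fin k → ℂ)) = regSet n k ∅ := by
    ext p; simp [regSet]
  have ej : ∀ j, {t : Fin n → ℂ | ∀ i, i ≠ j → t i ≠ 0} ×ˢ (Set.univ : Set (Fin k → ℂ))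
      = regSet n k {j} := by
    intro j; ext p; simp [regSet]
  rw [e0] at hf hnz
  simp only [e0, ej] at hex ⊢
  have hm : ∀ j, ∃ m : ℤ, ∀ l, ExtJ f j l ↔ l ≤ m := by
    intro j
    obtain ⟨l₀, hl₀⟩ := hex j
    have h0 : ExtJ f j l₀ := hl₀
    obtain ⟨m, hm1, hm2⟩ := Int.exists_greatest_of_bdd (h0.bdd hnz) ⟨l₀, h0⟩
    exact ⟨m, fun l => ⟨hm2 l, fun h => hm1.mono h⟩⟩
  choose m hm using hm
  have hmain : ∀ l : Fin n → ℤ, (∃ F, AnalyticOnNhd ℂ F Set.univ ∧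
      ∀ p ∈ regSet n k ∅, F p = (∏ i, p.1 i ^ (-(l i))) * f p) ↔ ∀ j, l j ≤ m j := by
    intro l
    rw [main_iff f hf l]
    exact forall_congr' fun j => hm j (l j)
  refine ⟨m, hmain, fun m' hm' => ?_⟩
  have h : ∀ l : Fin n → ℤ, (∀ j, l j ≤ m' j) ↔ ∀ j, l j ≤ m j :=
    fun l => (hm' l).symm.trans (hmain l)
  funext j
  exact le_antisymm ((h m').1 (fun _ => le_rfl) j) ((h m).2 (fun _ => le_rfl) j)
end
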